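/- The algebra 𝒜 is isomorphic as a ℚ-algebra to the ring ℚ[X, X^{−1}] of Laurent polynomials over ℚ; an isomorphism can be chosen sending X to 1 − Y. -/

import Mathlib

/-- `Y = Σ_{n≥1} (n^{n-1}/n!) qⁿ` as a formal power series over `ℚ`. -/
noncomputable def Yq : PowerSeries ℚ :=
  PowerSeries.mk fun n => if n = 0 then 0 else (n : ℚ) ^ (n - 1) / n.factorial

/-- `Z = Σ_{n≥1} (nⁿ/n!) qⁿ` as a formal power series over `ℚ`. -/
noncomputable def Zq : PowerSeries ℚ :=
  PowerSeries.mk fun n => if n = 0 then 0 else (n : ℚ) ^ n / n.factorial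

lemma abel_zero (m : ℕ) :
    ∑ k ∈ Finset.range (m + 2), ((m + 2).choose (k + 1) : ℚ) * ((k : ℚ) + 1) ^ k *
      (-((k : ℚ) + 1)) ^ (m + 1 - k) = 0 := by
  have h := congrFun (fwdDiff_iter_pow_eq_zero_of_lt (R := ℚ) (show m + 1 < m + 2 by omega)) 0
  rw [fwdDiff_iter_eq_sum_shift, Finset.sum_range_succ'] at h
  simp only [Pi.zero_apply] at h
  rw [← h]
  simp only [zero_smul, add_zero, ne_eq, Nat.add_eq_zero_iff, one_ne_zero, and_false,
    not_false_eq_true, zero_pow, smul_zero]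
  refine Finset.sum_congr rfl fun k hk => ?_
  have hk' : k ≤ m + 1 := by have := Finset.mem_range.1 hk; omega
  have e : m + 2 - (k + 1) = m + 1 - k := by omega
  have e2 : ((k : ℚ) + 1) ^ (m + 1) = ((k : ℚ) + 1) ^ k * ((k : ℚ) + 1) ^ (m + 1 - k) := by
    rw [← pow_add]; congr 1; omega
  rw [e, neg_pow]
  simp only [zsmul_eq_mul, nsmul_eq_mul, zero_add, mul_one]
  push_cast
  rw [e2]
  ring

open Polynomial in
lemma abel_poly (m : ℕ) :
    ∑ k ∈ Finset.range (m + 1), (C (((m + 1).choose (k + 1) : ℚ) * ((k : ℚ) + 1) ^ k) *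
      (X - C ((k : ℚ) + 1)) ^ (m - k) : ℚ[X]) = C ((m : ℚ) + 1) * X ^ m := by
  induction m with
  | zero => simp
  | succ m ih =>
    rw [← sub_eq_zero]
    set D := (∑ k ∈ Finset.range (m + 1 + 1),
      (C (((m + 1 + 1).choose (k + 1) : ℚ) * ((k : ℚ) + 1) ^ k) *
      (X - C ((k : ℚ) + 1)) ^ (m + 1 - k) : ℚ[X])) - C (((m + 1 : ℕ) : ℚ) + 1) * X ^ (m + 1)
      with hD
    have hd : derivative D = 0 := by
      rw [hD, derivative_sub, derivative_sum, Finset.sum_range_succ, sub_eq_zero]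
      have e : derivative (C (((m + 1 : ℕ) : ℚ) + 1) * X ^ (m + 1) : ℚ[X]) =
          C ((m : ℚ) + 2) * (C ((m : ℚ) + 1) * X ^ m) := by
        rw [derivative_C_mul, derivative_X_pow]
        simp only [Nat.cast_add, Nat.cast_one, Nat.add_sub_cancel, map_add, map_natCast, map_one,
          C_ofNat]
        ring
      rw [e, ← ih, Finset.mul_sum]
      have z : derivative (C (((m + 1 + 1).choose (m + 1 + 1) : ℚ) * (((m + 1 : ℕ) : ℚ) + 1) ^ (m + 1)) *
        (X - C (((m + 1 : ℕ) : ℚ) + 1)) ^ (m + 1 - (m + 1)) : ℚ[X]) = 0 := by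
        rw [Nat.sub_self, pow_zero, mul_one, derivative_C]
      rw [z, add_zero]
      refine Finset.sum_congr rfl fun k hk => ?_
      have hk' : k ≤ m := by have := Finset.mem_range.1 hk; omega
      obtain ⟨j, rfl⟩ := Nat.exists_eq_add_of_le hk'
      have e1 : k + j + 1 - k = j + 1 := by omega
      have e2 : k + j - k = j := by omega
      have c := Nat.choose_mul_succ_eq (k + j + 1) (k + 1)
      have e3 : k + j + 1 + 1 - (k + 1) = j + 1 := by omega
      rw [e3] at c
      have c' : ((k + j + 1).choose (k + 1) : ℚ) * ((k : ℚ) + j + 1 + 1) =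
        ((k + j + 1 + 1).choose (k + 1) : ℚ) * ((j : ℚ) + 1) := by exact_mod_cast c
      rw [e1, e2, derivative_C_mul, derivative_X_sub_C_pow, Nat.add_sub_cancel]
      rw [← mul_assoc, ← mul_assoc, ← C_mul, ← C_mul]
      congr 2
      push_cast
      linear_combination (-((k : ℚ) + 1) ^ k) * c'
    have h0 := derivative_eq_zero.1 hd
    rw [eq_C_of_natDegree_eq_zero h0, coeff_zero_eq_eval_zero, hD]
    rw [eval_sub, eval_finsetSum]
    have := abel_zero m
    simp only [eval_mul, eval_C, eval_pow, eval_sub, eval_X, zero_sub]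
    rw [this]
    simp

lemma abel_num (m : ℕ) :
    ∑ k ∈ Finset.range (m + 1), ((m + 1).choose (k + 1) : ℚ) * ((k : ℚ) + 1) ^ k *
      ((m - k : ℕ) : ℚ) ^ (m - k) = ((m : ℚ) + 1) ^ (m + 1) := by
  have h := congrArg (Polynomial.eval ((m : ℚ) + 1)) (abel_poly m)
  simp only [Polynomial.eval_finsetSum, Polynomial.eval_mul, Polynomial.eval_C,
    Polynomial.eval_pow, Polynomial.eval_sub, Polynomial.eval_X] at h
  rw [pow_succ', ← h]
  refine Finset.sum_congr rfl fun k hk => ?_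
  have hk' : k ≤ m := by have := Finset.mem_range.1 hk; omega
  rw [Nat.cast_sub hk', add_sub_add_right_eq_sub]

lemma Y_mul : Yq * (1 + Zq) = Zq := by
  have h1 : (1 + Zq) = PowerSeries.mk fun n => (n : ℚ) ^ n / n.factorial := by
    ext n
    rcases n with _ | n <;> simp [Zq, PowerSeries.coeff_one]
  rw [h1]
  ext n
  rw [PowerSeries.coeff_mul, Finset.Nat.sum_antidiagonal_eq_sum_range_succ_mk,
    Finset.sum_range_succ']
  rcases n with _ | m
  · simp [Yq, Zq]
  simp only [Yq, Zq, PowerSeries.coeff_mk]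
  simp only [Nat.add_eq_zero_iff, one_ne_zero, and_false, if_false, if_true, zero_mul, add_zero,
    Nat.add_sub_cancel]
  push_cast
  rw [← abel_num m, Finset.sum_div]
  refine Finset.sum_congr rfl fun k hk => ?_
  have hk' : k ≤ m := by have := Finset.mem_range.1 hk; omega
  have e : m + 1 - (k + 1) = m - k := by omega
  rw [Nat.cast_choose ℚ (show k + 1 ≤ m + 1 by omega), e]
  have a1 : ((k + 1).factorial : ℚ) ≠ 0 := by positivity
  have a2 : ((m - k).factorial : ℚ) ≠ 0 := by positivity
  have a3 : ((m + 1).factorial : ℚ) ≠ 0 := by positivity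
  field_simp

lemma unit_eq : (1 - Yq) * (1 + Zq) = 1 := by
  linear_combination -Y_mul

noncomputable def uY : (PowerSeries ℚ)ˣ where
  val := 1 - Yq
  inv := 1 + Zq
  val_inv := unit_eq
  inv_val := by rw [mul_comm]; exact unit_eq

lemma Y_transc : Transcendental ℚ (1 - Yq) := by
  intro h
  have h2 : IsIntegral ℚ Yq := by
    have := (isIntegral_one (R := ℚ) (B := PowerSeries ℚ)).sub h.isIntegral
    simpa using this
  have hne : Yq ≠ 0 := by
    intro h0
    have := congrArg (PowerSeries.coeff 1) h0
    simp [Yq] at this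
  have hu := h2.isUnit hne
  rw [PowerSeries.isUnit_iff_constantCoeff] at hu
  simp [Yq] at hu

noncomputable def phi : LaurentPolynomial ℚ →ₐ[ℚ] PowerSeries ℚ :=
  { LaurentPolynomial.eval₂ (algebraMap ℚ (PowerSeries ℚ)) uY with
    commutes' := fun r => by
      rw [← LaurentPolynomial.C_eq_algebraMap]
      exact LaurentPolynomial.eval₂_C _ _ _ }

lemma phi_apply (f : LaurentPolynomial ℚ) :
    phi f = LaurentPolynomial.eval₂ (algebraMap ℚ (PowerSeries ℚ)) uY f := rfl

lemma phi_T (n : ℤ) : phi (LaurentPolynomial.T n) = ((uY ^ n : (PowerSeries ℚ)ˣ) : PowerSeries ℚ) := by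
  rw [phi_apply, LaurentPolynomial.eval₂_T]

lemma phi_T1 : phi (LaurentPolynomial.T 1) = 1 - Yq := by
  rw [phi_T, zpow_one]; rfl

lemma phi_Tm1 : phi (LaurentPolynomial.T (-1)) = 1 + Zq := by
  rw [phi_T, zpow_neg_one]; rfl

lemma phi_inj : Function.Injective phi := by
  rw [injective_iff_map_eq_zero]
  intro f hf
  obtain ⟨n, p, hp⟩ := f.exists_T_pow
  have h : phi (Polynomial.toLaurent p) = 0 := by rw [hp, map_mul, hf, zero_mul]
  rw [phi_apply, LaurentPolynomial.eval₂_toLaurent] at h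
  have hp0 : p = 0 := by
    refine (transcendental_iff.1 Y_transc) p ?_
    rw [Polynomial.aeval_def]
    exact h
  rw [hp0, map_zero] at hp
  exact ((LaurentPolynomial.isUnit_T (n : ℤ)).mul_left_eq_zero).1 hp.symm

lemma phi_range : phi.range = Algebra.adjoin ℚ {Yq, Zq} := by
  have hY : Yq ∈ Algebra.adjoin ℚ {Yq, Zq} := Algebra.subset_adjoin (by simp)
  have hZ : Zq ∈ Algebra.adjoin ℚ {Yq, Zq} := Algebra.subset_adjoin (by simp)
  apply le_antisymm
  · rintro _ ⟨f, rfl⟩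
    change phi f ∈ _
    induction f using LaurentPolynomial.induction_on' with
    | add p q hp hq => rw [map_add]; exact add_mem hp hq
    | C_mul_T n a =>
      rw [map_mul, LaurentPolynomial.C_eq_algebraMap, AlgHom.commutes]
      refine mul_mem (Subalgebra.algebraMap_mem _ _) ?_
      obtain ⟨k, rfl | rfl⟩ := n.eq_nat_or_neg
      · have : (LaurentPolynomial.T (k : ℤ) : LaurentPolynomial ℚ) = LaurentPolynomial.T 1 ^ k := by
          rw [LaurentPolynomial.T_pow, mul_one]
        rw [this, map_pow, phi_T1]
        exact pow_mem (sub_mem (one_mem _) hY) k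
      · have : (LaurentPolynomial.T (-(k : ℤ)) : LaurentPolynomial ℚ)
            = LaurentPolynomial.T (-1) ^ k := by
          rw [LaurentPolynomial.T_pow, mul_neg_one]
        rw [this, map_pow, phi_Tm1]
        exact pow_mem (add_mem (one_mem _) hZ) k
  · rw [Algebra.adjoin_le_iff]
    rintro x (rfl | rfl)
    · exact ⟨1 - LaurentPolynomial.T 1, by
        change phi _ = _
        rw [map_sub, map_one, phi_T1]; ring⟩
    · exact ⟨LaurentPolynomial.T (-1) - 1, by
        change phi _ = _
        rw [map_sub, map_one, phi_Tm1]; ring⟩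

/-- The algebra `𝒜 = ℚ[Y,Z]` is isomorphic, as a `ℚ`-algebra, to the Laurent polynomial
ring `ℚ[X, X⁻¹]`, via an isomorphism sending `X` to `1 - Y`. -/
theorem adjoin_YZ_iso_laurent :
    ∃ e : LaurentPolynomial ℚ ≃ₐ[ℚ] Algebra.adjoin ℚ {Yq, Zq},
      (e (LaurentPolynomial.T 1) : PowerSeries ℚ) = 1 - Yq := by
  refine ⟨(AlgEquiv.ofInjective phi phi_inj).trans (Subalgebra.equivOfEq _ _ phi_range), ?_⟩
  exact phi_T1
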